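/- The set GL_p(H) of invertible bounded operators g = (a b; c d) on a polarized Hilbert space H = H₊ ⊕ H₋ whose off-diagonal blocks b, c belong to the Schatten class L^{2p} is a group under composition: it is closed under products and inverses. -/

import Mathlib

open scoped InnerProductSpace

variable {H : Type*} [NormedAddCommGroup H] [InnerProductSpace ℂ H] [CompleteSpace H]

/-- `T` is a Hilbert–Schmidt operator: `∑ ‖T e_i‖² < ∞` for the Hilbert basis `e`. -/
def IsHilbertSchmidt {ι : Type*} (e : HilbertBasis ι ℂ H) (T : H →L[ℂ] H) : Prop :=
  Summable fun i => ‖T (e i)‖ ^ 2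

/-- The projection `P₊ = (1 + ε)/2` onto `H₊` associated to a sign operator `ε`. -/
noncomputable def Pplus (ε : H →L[ℂ] H) : H →L[ℂ] H := (2⁻¹ : ℂ) • (1 + ε)

/-- The projection `P₋ = (1 - ε)/2` onto `H₋` associated to a sign operator `ε`. -/
noncomputable def Pminus (ε : H →L[ℂ] H) : H →L[ℂ] H := (2⁻¹ : ℂ) • (1 - ε)

/-- The operator `(A*A)^(p/2)`, defined via the continuous functional calculus. -/
noncomputable def absPow (p : ℝ) (A : H →L[ℂ] H) : H →L[ℂ] H :=
  cfc (fun x : ℝ => x ^ (p / 2)) (ContinuousLinearMap.adjoint A ∘L A)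

/-- `A` belongs to the Schatten ideal `L^p`. -/
def MemSchatten {ι : Type*} (e : HilbertBasis ι ℂ H) (p : ℝ) (A : H →L[ℂ] H) : Prop :=
  Summable fun i => Complex.re ⟪(absPow p A) (e i), e i⟫_ℂ

/-- `g` lies in `GL_p(H)`: it is invertible and its off-diagonal blocks with respect to the
polarization defined by the sign operator `ε` belong to the Schatten class `L^{2p}`. -/
def MemGLp {ι : Type*} (e : HilbertBasis ι ℂ H) (ε : H →L[ℂ] H) (p : ℝ)
    (g : (H →L[ℂ] H)ˣ) : Prop :=
  MemSchatten e (2 * p) (Pplus ε ∘L (g : H →L[ℂ] H) ∘L Pminus ε) ∧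
    MemSchatten e (2 * p) (Pminus ε ∘L (g : H →L[ℂ] H) ∘L Pplus ε)

/-!
For `q ≥ 2`, an operator `A` lies in `L^q` exactly when `(‖A f_j‖)_j ∈ ℓ^q` for every Hilbert basis
`f`. Indeed `tr (A*A)^(q/2)` does not depend on the basis, and Jensen's inequality for the spectral
measure of `A*A` at a unit vector gives `‖A x‖ ^ q ≤ ⟪(A*A)^(q/2) x, x⟫`; conversely `A` is compact,
and on an eigenbasis of `A*A` this inequality is an equality. The condition on all bases is stable
under right multiplication by unitaries, hence by every operator, since unitaries span.

Since `ε² = 1`, the off-diagonal blocks of `g` belong to the ideal `L^{2p}` exactly when `⁅ε, g⁆`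
does, and the Leibniz rule for `⁅ε, ·⁆` does the rest: `⁅ε, gh⁆ = ⁅ε, g⁆ h + g ⁅ε, h⁆` and
`⁅ε, g⁻¹⁆ = -g⁻¹ ⁅ε, g⁆ g⁻¹`.
-/

open Filter Topology
open scoped ENNReal

section OrthonormalSequences

variable {𝕜 E F : Type*} [RCLike 𝕜] [NormedAddCommGroup E] [InnerProductSpace 𝕜 E]
  [NormedAddCommGroup F] [NormedSpace 𝕜 F]

theorem exists_orthonormal_seq_of_forall_finiteDimensional {P : E → Prop}
    (hP : ∀ V : Submodule 𝕜 E, FiniteDimensional 𝕜 V → ∃ x ∈ Vᗮ, ‖x‖ = 1 ∧ P x) :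
    ∃ v : ℕ → E, Orthonormal 𝕜 v ∧ ∀ n, P (v n) := by
  have : Std.Symm fun x y : E => inner 𝕜 x y = 0 := ⟨fun _ _ => inner_eq_zero_symm.mp⟩
  obtain ⟨v, hv, hv_orth⟩ := exists_seq_of_forall_finset_exists' (fun x : E => ‖x‖ = 1 ∧ P x)
    (fun x y => inner 𝕜 x y = 0) fun s _ => by
      obtain ⟨y, hy_orth, hy⟩ := hP (Submodule.span 𝕜 s) (.span_finset 𝕜 s)
      exact ⟨y, hy, fun x hx => hy_orth x (Submodule.subset_span hx)⟩
  exact ⟨v, ⟨fun n => (hv n).1, hv_orth⟩, fun n => (hv n).2⟩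

theorem isCompactOperator_comp_starProjection (A : E →L[𝕜] F) (V : Submodule 𝕜 E)
    [FiniteDimensional 𝕜 V] : IsCompactOperator (A ∘L V.starProjection) := by
  have : ProperSpace V := FiniteDimensional.proper 𝕜 V
  exact (isCompactOperator_of_locallyCompactSpace_rng (A ∘L V.subtypeL)).comp_clm
    V.orthogonalProjectionOnto

theorem norm_sub_comp_starProjection_le {A : E →L[𝕜] F} {V : Submodule 𝕜 E}
    [V.HasOrthogonalProjection] {δ : ℝ} (hδ : 0 ≤ δ) (hA : ∀ x ∈ Vᗮ, ‖x‖ = 1 → ‖A x‖ ≤ δ) :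
    ‖A - A ∘L V.starProjection‖ ≤ δ := by
  have hA' : ∀ x ∈ Vᗮ, ‖A x‖ ≤ δ * ‖x‖ := by
    intro x hx
    rcases eq_or_ne x 0 with rfl | hx0
    · simp
    · have hunit := hA _ (Vᗮ.smul_mem ((‖x‖ : 𝕜)⁻¹) hx) (norm_smul_inv_norm hx0)
      rwa [map_smul, norm_smul, norm_inv, RCLike.norm_coe_norm,
        inv_mul_le_iff₀' (norm_pos_iff.mpr hx0)] at hunit
  refine ContinuousLinearMap.opNorm_le_bound _ hδ fun x => ?_
  calc ‖A x - A (V.starProjection x)‖ = ‖A (Vᗮ.starProjection x)‖ := by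
        rw [← map_sub, V.starProjection_orthogonal_val]
    _ ≤ δ * ‖Vᗮ.starProjection x‖ := hA' _ (Vᗮ.starProjection_apply_mem x)
    _ ≤ δ * ‖x‖ := by gcongr; exact Vᗮ.norm_starProjection_apply_le x

theorem isCompactOperator_of_forall_orthonormal_tendsto [CompleteSpace F] {A : E →L[𝕜] F}
    (hA : ∀ v : ℕ → E, Orthonormal 𝕜 v → Tendsto (fun n => A (v n)) atTop (𝓝 0)) :
    IsCompactOperator A := by
  refine isClosed_setOfPred_isCompactOperator.closure_subset ?_
  refine Metric.mem_closure_iff.mpr fun δ hδ => ?_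
  suffices ∃ V : Submodule 𝕜 E, FiniteDimensional 𝕜 V ∧ ∀ x ∈ Vᗮ, ‖x‖ = 1 → ‖A x‖ ≤ δ / 2 by
    obtain ⟨V, _, hV⟩ := this
    refine ⟨A ∘L V.starProjection, isCompactOperator_comp_starProjection A V, ?_⟩
    rw [dist_eq_norm]
    exact (norm_sub_comp_starProjection_le (by positivity) hV).trans_lt (half_lt_self hδ)
  by_contra! hlarge
  obtain ⟨v, hv, hAv⟩ := exists_orthonormal_seq_of_forall_finiteDimensional hlarge
  exact (half_pos hδ).not_ge (ge_of_tendsto' (by simpa using (hA v hv).norm) fun n => (hAv n).le)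

end OrthonormalSequences

section HilbertBases

variable {𝕜 E F : Type*} [RCLike 𝕜] [NormedAddCommGroup E] [InnerProductSpace 𝕜 E]
  [NormedAddCommGroup F] [InnerProductSpace 𝕜 F]

theorem hasSum_sq_norm_inner_hilbertBasis {κ : Type*} (f : HilbertBasis κ 𝕜 E) (x : E) :
    HasSum (fun j => ‖inner 𝕜 (f j) x‖ ^ 2) (‖x‖ ^ 2) := by
  have h := lp.hasSum_norm (p := 2) (by norm_num) (f.repr x)
  simpa [f.repr_apply_apply] using h

variable [CompleteSpace E] [CompleteSpace F]

theorem summable_sq_norm_adjoint_hilbertBasis {ι κ : Type*} (e : HilbertBasis ι 𝕜 E)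
    (f : HilbertBasis κ 𝕜 F) {T : E →L[𝕜] F} (hT : Summable fun i => ‖T (e i)‖ ^ 2) :
    Summable fun j => ‖T.adjoint (f j)‖ ^ 2 := by
  have hmatrix : Summable fun x : ι × κ => ‖inner 𝕜 (f x.2) (T (e x.1))‖ ^ 2 := by
    refine (summable_prod_of_nonneg fun _ => sq_nonneg _).mpr
      ⟨fun i => (hasSum_sq_norm_inner_hilbertBasis f (T (e i))).summable, hT.congr fun i => ?_⟩
    exact (hasSum_sq_norm_inner_hilbertBasis f (T (e i))).tsum_eq.symm
  have hrows := ((summable_prod_of_nonneg fun _ => sq_nonneg _).mp hmatrix.prod_symm).2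
  refine hrows.congr fun j => ?_
  rw [← (hasSum_sq_norm_inner_hilbertBasis e (T.adjoint (f j))).tsum_eq]
  refine tsum_congr fun i => ?_
  rw [← T.adjoint_inner_left, norm_inner_symm, Prod.swap]

theorem exists_hilbertBasis_of_orthogonalFamily {ι : Type*} {V : ι → Submodule 𝕜 E}
    [∀ i, CompleteSpace (V i)] (hV : OrthogonalFamily 𝕜 (fun i => V i) fun i => (V i).subtypeₗᵢ)
    (htotal : (⨆ i, V i)ᗮ = ⊥) : ∃ (w : Set E) (f : HilbertBasis w 𝕜 E), ∀ j, ∃ i, f j ∈ V i := by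
  choose w b _ using fun i => exists_hilbertBasis 𝕜 (V i)
  have hon := hV.orthonormal_sigma_orthonormal fun i => (b i).orthonormal
  refine ⟨_, .mkOfOrthogonalEqBot hon.toSubtypeRange ?_, ?_⟩
  · rw [Subtype.range_coe, eq_bot_iff, ← htotal, ← Submodule.orthogonal_closure]
    refine Submodule.orthogonal_le (iSup_le fun i x hx => ?_)
    have hsum := ((b i).hasSum_repr ⟨x, hx⟩).mapL (V i).subtypeL
    refine (Submodule.isClosed_topologicalClosure _).mem_of_tendsto hsum (.of_forall fun t => ?_)
    refine Submodule.sum_mem _ fun j _ => ?_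
    rw [map_smul]
    exact Submodule.smul_mem _ _
      (Submodule.le_topologicalClosure _ (Submodule.subset_span ⟨⟨i, j⟩, rfl⟩))
  · rw [HilbertBasis.coe_mkOfOrthogonalEqBot]
    rintro ⟨_, ⟨i, j⟩, rfl⟩
    exact ⟨i, (b i j).2⟩

theorem exists_hilbertBasis_hasEigenvector {S : E →L[𝕜] E} (hS : S.IsSymmetric)
    (hc : IsCompactOperator S) :
    ∃ (w : Set E) (f : HilbertBasis w 𝕜 E), ∀ j, ∃ μ : 𝕜, S (f j) = μ • f j := by
  have : ∀ μ, CompleteSpace (Module.End.eigenspace (S : Module.End 𝕜 E) μ) := fun μ => inferInstance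
  obtain ⟨w, f, hf⟩ := exists_hilbertBasis_of_orthogonalFamily hS.orthogonalFamily_eigenspaces
    (ContinuousLinearMap.orthogonalComplement_iSup_eigenspaces_eq_bot hc hS)
  exact ⟨w, f, fun j => (hf j).imp fun μ hμ => Module.End.mem_eigenspace_iff.mp hμ⟩

end HilbertBases

section BasisLp

variable {𝕜 E F G : Type*} [RCLike 𝕜] [NormedAddCommGroup E] [InnerProductSpace 𝕜 E]
  [NormedAddCommGroup F] [NormedSpace 𝕜 F] [NormedAddCommGroup G] [NormedSpace 𝕜 G]

/-- The operators `A` with `(‖A f_j‖)_j ∈ ℓ^q` for every Hilbert basis `f`. For operators on a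
Hilbert space and `2 ≤ q < ∞` this is the Schatten ideal `L^q`, in a form that makes the ideal
properties visible. A Hilbert basis can be reindexed by its range, so bases indexed by subsets of
`E` suffice. -/
def basisLp (q : ℝ≥0∞) : Submodule 𝕜 (E →L[𝕜] F) where
  carrier := {A | ∀ (w : Set E) (f : HilbertBasis w 𝕜 E), Memℓp (fun j => A (f j)) q}
  zero_mem' _ _ := zero_mem_ℓp'
  add_mem' hA hB w f := (hA w f).add (hB w f)
  smul_mem' c _ hA w f := (hA w f).const_smul c

theorem clm_comp_mem_basisLp {q : ℝ≥0∞} {A : E →L[𝕜] F} (hA : A ∈ basisLp q) (B : F →L[𝕜] G) :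
    B ∘L A ∈ basisLp q := fun w f =>
  ((hA w f).norm.const_mul ‖B‖).mono fun j => B.le_opNorm (A (f j))

theorem comp_linearIsometryEquiv_mem_basisLp {q : ℝ≥0∞} {A : E →L[𝕜] F} (hA : A ∈ basisLp q)
    (U : E ≃ₗᵢ[𝕜] E) : A ∘L (U : E →L[𝕜] E) ∈ basisLp q := fun w f =>
  hA w (.ofRepr (U.symm.trans f.repr))

theorem isCompactOperator_of_mem_basisLp [CompleteSpace E] [CompleteSpace F] {q : ℝ≥0∞}
    (hq : q ≠ ∞) {A : E →L[𝕜] F} (hA : A ∈ basisLp q) : IsCompactOperator A := by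
  refine isCompactOperator_of_forall_orthonormal_tendsto fun v hv => ?_
  obtain ⟨w, f, hvw, hf⟩ := hv.toSubtypeRange.exists_hilbertBasis_extension
  have hr : 0 < (max q 1).toReal := ENNReal.toReal_pos (by positivity) (by simpa using hq)
  have hsum := (((hA w f).of_exponent_ge (le_max_left q 1)).summable hr).comp_injective
    (i := fun n => ⟨v n, hvw ⟨n, rfl⟩⟩) fun m n hmn =>
      hv.linearIndependent.injective (congrArg Subtype.val hmn)
  have hlim := hsum.tendsto_atTop_zero.rpow_const (p := (max q 1).toReal⁻¹) (.inr (by positivity))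
  rw [Real.zero_rpow (inv_pos.mpr hr).ne'] at hlim
  refine tendsto_zero_iff_norm_tendsto_zero.mpr (hlim.congr fun n => ?_)
  simp only [Function.comp_apply, hf, Real.rpow_rpow_inv (norm_nonneg _) hr.ne']

end BasisLp

theorem comp_clm_mem_basisLp {F : Type*} [NormedAddCommGroup F] [NormedSpace ℂ F]
    {q : ℝ≥0∞} {A : H →L[ℂ] F} (hA : A ∈ basisLp q) (B : H →L[ℂ] H) : A ∘L B ∈ basisLp q := by
  have hB : B ∈ Submodule.span ℂ (unitary (H →L[ℂ] H) : Set (H →L[ℂ] H)) := by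
    rw [CStarAlgebra.span_unitary]
    exact Submodule.mem_top
  induction hB using Submodule.span_induction with
  | mem U hU =>
    exact comp_linearIsometryEquiv_mem_basisLp hA (Unitary.linearIsometryEquiv ⟨U, hU⟩)
  | zero => simpa only [ContinuousLinearMap.comp_zero] using (basisLp q).zero_mem
  | add B C _ _ hB hC => simpa only [ContinuousLinearMap.comp_add] using (basisLp q).add_mem hB hC
  | smul c B _ hB => simpa only [ContinuousLinearMap.comp_smul] using (basisLp q).smul_mem c hB

section FunctionalCalculus

theorem mem_spectrum_of_apply_eq_smul {𝕜 E : Type*} [NormedField 𝕜] [NormedAddCommGroup E]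
    [NormedSpace 𝕜 E] {S : E →L[𝕜] E} {x : E} {c : 𝕜} (hx : x ≠ 0) (hSx : S x = c • x) :
    c ∈ spectrum 𝕜 S := by
  rintro ⟨u, hu⟩
  have hux : (u : E →L[𝕜] E) x = 0 := by
    rw [hu, Algebra.algebraMap_eq_smul_one]
    simp [hSx]
  apply hx
  rw [← one_apply_eq_self (F := E →L[𝕜] E) x, ← u.inv_mul, mul_apply_eq_comp, hux, map_zero]

theorem cfc_apply_eq_smul {S : H →L[ℂ] H} (hS : IsSelfAdjoint S) {x : H} {c : ℝ}
    (hSx : S x = (c : ℂ) • x) {φ : ℝ → ℝ} (hφ : ContinuousOn φ (spectrum ℝ S)) :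
    cfc φ S x = (φ c : ℂ) • x := by
  rcases eq_or_ne x 0 with rfl | hx
  · simp only [map_zero, smul_zero]
  have hc : c ∈ spectrum ℝ S :=
    (spectrum.algebraMap_mem_iff ℂ).mp (mem_spectrum_of_apply_eq_smul hx hSx)
  suffices ∀ ψ : C(spectrum ℝ S, ℝ), cfcHom hS ψ x = (ψ ⟨c, hc⟩ : ℂ) • x by
    rw [cfc_apply φ S hS hφ, this]
    rfl
  intro ψ
  induction ψ using ContinuousMap.induction_on_of_compact with
  | const r =>
    rw [show ContinuousMap.const (spectrum ℝ S) r = algebraMap ℝ _ r from rfl,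
      AlgHomClass.commutes, Algebra.algebraMap_eq_smul_one]
    simp
  | id => rwa [cfcHom_id hS]
  | star_id => rwa [map_star, cfcHom_id hS, hS.star_eq]
  | add ψ χ hψ hχ =>
    rw [map_add, add_apply, hψ, hχ, ContinuousMap.add_apply, Complex.ofReal_add, add_smul]
  | mul ψ χ hψ hχ =>
    rw [map_mul, mul_apply_eq_comp, hχ, map_smul, hψ, smul_smul,
      ContinuousMap.mul_apply, Complex.ofReal_mul, mul_comm]
  | frequently ψ hψ =>
    have hclosed : IsClosed {ψ : C(spectrum ℝ S, ℝ) | cfcHom hS ψ x = (ψ ⟨c, hc⟩ : ℂ) • x} :=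
      isClosed_eq ((cfcHom_continuous hS).clm_apply continuous_const) (by fun_prop)
    exact hclosed.mem_of_frequently_of_tendsto hψ tendsto_id

theorem add_mul_re_inner_le_re_inner_cfc {S : H →L[ℂ] H} (hS : IsSelfAdjoint S) {φ : ℝ → ℝ}
    (hφ : ContinuousOn φ (spectrum ℝ S)) {a b : ℝ} (hab : ∀ t ∈ spectrum ℝ S, a + b * t ≤ φ t)
    {x : H} (hx : ‖x‖ = 1) :
    a + b * Complex.re ⟪S x, x⟫_ℂ ≤ Complex.re ⟪cfc φ S x, x⟫_ℂ := by
  have hle : algebraMap ℝ _ a + b • S ≤ cfc φ S := by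
    rw [← cfc_const_mul_id b S, ← cfc_const_add a _ S]
    exact cfc_mono hab
  have hform := ((ContinuousLinearMap.le_def _ _).mp hle).re_inner_nonneg_left x
  simpa [Algebra.algebraMap_eq_smul_one, inner_sub_left, inner_add_left,
    inner_smul_left_eq_smul, hx] using hform

theorem rpow_add_mul_sub_le_rpow {r t s : ℝ} (hr : 1 ≤ r) (ht : 0 ≤ t) (hs : 0 ≤ s) :
    t ^ r + r * t ^ (r - 1) * (s - t) ≤ s ^ r := by
  rcases ht.eq_or_lt with rfl | ht
  · rcases hr.eq_or_lt with rfl | hr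
    · simp
    · simpa [Real.zero_rpow (sub_pos.mpr hr).ne', Real.zero_rpow (zero_lt_one.trans hr).ne']
        using Real.rpow_nonneg hs r
  have hbernoulli := one_add_mul_self_le_rpow_one_add (s := s / t - 1)
    (by linarith [div_nonneg hs ht.le]) hr
  rw [add_sub_cancel, Real.div_rpow hs ht.le, le_div_iff₀ (by positivity)] at hbernoulli
  refine hbernoulli.trans_eq' ?_
  rw [Real.rpow_sub_one ht.ne']
  field_simp

theorem rpow_re_inner_le_re_inner_cfc_rpow {S : H →L[ℂ] H} (hS : 0 ≤ S) {r : ℝ} (hr : 1 ≤ r)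
    {x : H} (hx : ‖x‖ = 1) :
    Complex.re ⟪S x, x⟫_ℂ ^ r ≤ Complex.re ⟪cfc (fun t : ℝ => t ^ r) S x, x⟫_ℂ := by
  set m := Complex.re ⟪S x, x⟫_ℂ with hm
  have hm0 : 0 ≤ m := ((ContinuousLinearMap.nonneg_iff_isPositive S).mp hS).re_inner_nonneg_left x
  have htangent := add_mul_re_inner_le_re_inner_cfc hS.isSelfAdjoint
    (Real.continuous_rpow_const (by positivity)).continuousOn (a := m ^ r - r * m ^ (r - 1) * m)
    (b := r * m ^ (r - 1)) (fun t ht => ?_) hx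
  · rwa [← hm, sub_add_cancel] at htangent
  · linarith [rpow_add_mul_sub_le_rpow hr hm0 (spectrum_nonneg_of_nonneg hS ht)]

end FunctionalCalculus

section Schatten

theorem re_inner_eq_sq_norm_sqrt {T : H →L[ℂ] H} (hT : 0 ≤ T) (x : H) :
    Complex.re ⟪T x, x⟫_ℂ = ‖CFC.sqrt T x‖ ^ 2 := by
  rw [ContinuousLinearMap.apply_norm_sq_eq_inner_adjoint_left,
    ← ContinuousLinearMap.star_eq_adjoint, (CFC.sqrt_nonneg T).isSelfAdjoint.star_eq,
    ← ContinuousLinearMap.mul_def, CFC.sqrt_mul_sqrt_self T]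
  rfl

theorem summable_re_inner_hilbertBasis {ι κ : Type*} {T : H →L[ℂ] H} (hT : 0 ≤ T)
    (e : HilbertBasis ι ℂ H) (f : HilbertBasis κ ℂ H)
    (he : Summable fun i => Complex.re ⟪T (e i), e i⟫_ℂ) :
    Summable fun j => Complex.re ⟪T (f j), f j⟫_ℂ := by
  simp only [re_inner_eq_sq_norm_sqrt hT] at he ⊢
  have hadj := summable_sq_norm_adjoint_hilbertBasis e f he
  rwa [← ContinuousLinearMap.star_eq_adjoint, (CFC.sqrt_nonneg T).isSelfAdjoint.star_eq] at hadj

theorem absPow_nonneg (q : ℝ) (A : H →L[ℂ] H) : 0 ≤ absPow q A :=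
  cfc_nonneg fun _ ht =>
    Real.rpow_nonneg (spectrum_nonneg_of_nonneg (star_mul_self_nonneg A) ht) _

theorem MemSchatten.change_basis {ι κ : Type*} {e : HilbertBasis ι ℂ H} {q : ℝ}
    {A : H →L[ℂ] H} (hA : MemSchatten e q A) (f : HilbertBasis κ ℂ H) : MemSchatten f q A :=
  summable_re_inner_hilbertBasis (absPow_nonneg q A) e f hA

theorem sq_rpow_div_two {a : ℝ} (ha : 0 ≤ a) (q : ℝ) : (a ^ 2) ^ (q / 2) = a ^ q := by
  rw [Real.rpow_div_two_eq_sqrt q (sq_nonneg a), Real.sqrt_sq ha]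

theorem rpow_norm_le_re_inner_absPow {q : ℝ} (hq : 2 ≤ q) (A : H →L[ℂ] H) {x : H}
    (hx : ‖x‖ = 1) : ‖A x‖ ^ q ≤ Complex.re ⟪absPow q A x, x⟫_ℂ := by
  have h := rpow_re_inner_le_re_inner_cfc_rpow (star_mul_self_nonneg A) (r := q / 2)
    (by linarith) hx
  rwa [← sq_rpow_div_two (norm_nonneg _), A.apply_norm_sq_eq_inner_adjoint_left]

theorem re_inner_absPow_of_eigenvector {q : ℝ} (hq : 0 ≤ q) {A : H →L[ℂ] H} {x : H}
    (hx : ‖x‖ = 1) {μ : ℂ} (hμ : (A.adjoint ∘L A) x = μ • x) :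
    Complex.re ⟪absPow q A x, x⟫_ℂ = ‖A x‖ ^ q := by
  have hμ_eq : μ = ((‖A x‖ ^ 2 : ℝ) : ℂ) := by
    have h := A.adjoint_inner_right x (A x)
    rw [← ContinuousLinearMap.comp_apply, hμ, inner_smul_right, inner_self_eq_norm_sq_to_K,
      inner_self_eq_norm_sq_to_K, hx] at h
    simpa using h
  rw [hμ_eq] at hμ
  have habs : absPow q A x = ((‖A x‖ ^ q : ℝ) : ℂ) • x := by
    rw [← sq_rpow_div_two (norm_nonneg _)]
    exact cfc_apply_eq_smul (IsSelfAdjoint.star_mul_self A) hμ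
      (Real.continuous_rpow_const (by positivity)).continuousOn
  rw [habs, inner_smul_left, inner_self_eq_norm_sq_to_K, hx]
  simp

theorem memSchatten_iff_mem_basisLp {ι : Type*} (e : HilbertBasis ι ℂ H) {q : ℝ} (hq : 2 ≤ q)
    {A : H →L[ℂ] H} : MemSchatten e q A ↔ A ∈ basisLp (ENNReal.ofReal q) := by
  have hq_toReal : (ENNReal.ofReal q).toReal = q := ENNReal.toReal_ofReal (by positivity)
  have hq_pos : 0 < (ENNReal.ofReal q).toReal := by rw [hq_toReal]; positivity
  constructor
  · intro hA w f
    rw [memℓp_gen_iff hq_pos, hq_toReal]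
    exact .of_nonneg_of_le (fun j => by positivity)
      (fun j => rpow_norm_le_re_inner_absPow hq A (f.orthonormal.1 j)) (hA.change_basis f)
  · intro hA
    have hcompact := isCompactOperator_of_mem_basisLp ENNReal.ofReal_ne_top hA
    obtain ⟨w, f, hf⟩ := exists_hilbertBasis_hasEigenvector
      (IsSelfAdjoint.star_mul_self A).isSymmetric (hcompact.clm_comp A.adjoint)
    refine MemSchatten.change_basis (e := f) ?_ e
    have hsum := (memℓp_gen_iff hq_pos).mp (hA w f)
    rw [hq_toReal] at hsum
    refine hsum.congr fun j => ?_
    obtain ⟨μ, hμ⟩ := hf j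
    exact (re_inner_absPow_of_eigenvector (by positivity) (f.orthonormal.1 j) hμ).symm

end Schatten

section Commutators

variable {R : Type*} [Ring R]

theorem lie_mul_eq (a b c : R) : ⁅a, b * c⁆ = ⁅a, b⁆ * c + b * ⁅a, c⁆ := by
  simp only [Ring.lie_def]
  noncomm_ring

theorem lie_units_inv (a : R) (u : Rˣ) : ⁅a, (↑u⁻¹ : R)⁆ = -(↑u⁻¹ * ⁅a, (u : R)⁆ * ↑u⁻¹) := by
  simp only [Ring.lie_def, mul_sub, sub_mul, mul_assoc, Units.mul_inv, mul_one,
    Units.inv_mul_cancel_left, neg_sub]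

end Commutators

section Blocks

variable {E : Type*} [NormedAddCommGroup E] [InnerProductSpace ℂ E]

theorem lie_eq_offDiagonal (ε g : E →L[ℂ] E) :
    ⁅ε, g⁆ = (2 : ℂ) • (Pplus ε ∘L g ∘L Pminus ε - Pminus ε ∘L g ∘L Pplus ε) := by
  simp only [← ContinuousLinearMap.mul_def, Pplus, Pminus, Ring.lie_def, smul_mul_assoc,
    mul_smul_comm, mul_add, mul_sub, add_mul, sub_mul, one_mul, mul_one]
  module

theorem Pplus_comp_comp_Pminus {ε : E →L[ℂ] E} (hε : ε ∘L ε = 1) (g : E →L[ℂ] E) :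
    Pplus ε ∘L g ∘L Pminus ε = (2⁻¹ : ℂ) • Pplus ε ∘L ⁅ε, g⁆ := by
  simp only [← ContinuousLinearMap.mul_def] at hε
  simp only [← ContinuousLinearMap.mul_def, Pplus, Pminus, Ring.lie_def, smul_mul_assoc,
    mul_smul_comm, mul_sub, add_mul, one_mul, mul_one, ← mul_assoc, hε]
  module

theorem Pminus_comp_comp_Pplus {ε : E →L[ℂ] E} (hε : ε ∘L ε = 1) (g : E →L[ℂ] E) :
    Pminus ε ∘L g ∘L Pplus ε = (-2⁻¹ : ℂ) • Pminus ε ∘L ⁅ε, g⁆ := by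
  simp only [← ContinuousLinearMap.mul_def] at hε
  simp only [← ContinuousLinearMap.mul_def, Pplus, Pminus, Ring.lie_def, smul_mul_assoc,
    mul_smul_comm, mul_sub, mul_add, sub_mul, one_mul, mul_one, ← mul_assoc, hε]
  module

end Blocks

section GLp

theorem memGLp_iff_lie_mem_basisLp {ι : Type*} (e : HilbertBasis ι ℂ H) {ε : H →L[ℂ] H}
    (hε : ε ∘L ε = 1) {p : ℝ} (hp : 1 ≤ p) {g : (H →L[ℂ] H)ˣ} :
    MemGLp e ε p g ↔ ⁅ε, (g : H →L[ℂ] H)⁆ ∈ basisLp (ENNReal.ofReal (2 * p)) := by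
  have hp' : 2 ≤ 2 * p := by linarith
  rw [MemGLp, memSchatten_iff_mem_basisLp e hp', memSchatten_iff_mem_basisLp e hp']
  constructor
  · rintro ⟨hplus, hminus⟩
    rw [lie_eq_offDiagonal]
    exact Submodule.smul_mem _ _ (Submodule.sub_mem _ hplus hminus)
  · intro hlie
    rw [Pplus_comp_comp_Pminus hε, Pminus_comp_comp_Pplus hε]
    exact ⟨Submodule.smul_mem _ _ (clm_comp_mem_basisLp hlie _),
      Submodule.smul_mem _ _ (clm_comp_mem_basisLp hlie _)⟩

theorem memGLp_mul_inv_general {ι : Type*} (e : HilbertBasis ι ℂ H)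
    (ε : H →L[ℂ] H) (hsq : ε ∘L ε = 1) (p : ℝ) (hp : 1 ≤ p)
    (g h : (H →L[ℂ] H)ˣ) (hg : MemGLp e ε p g) (hh : MemGLp e ε p h) :
    MemGLp e ε p (g * h) ∧ MemGLp e ε p g⁻¹ := by
  simp only [memGLp_iff_lie_mem_basisLp e hsq hp] at hg hh ⊢
  constructor
  · rw [Units.val_mul, lie_mul_eq]
    exact Submodule.add_mem _ (comp_clm_mem_basisLp hg _) (clm_comp_mem_basisLp hh _)
  · rw [lie_units_inv]
    exact Submodule.neg_mem _ (comp_clm_mem_basisLp (clm_comp_mem_basisLp hg _) _)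

end GLp

/-- `GL_p(H)` is a group: it is closed under products and inverses. -/
theorem memGLp_mul_inv {ι : Type*} (e : HilbertBasis ι ℂ H)
    (ε : H →L[ℂ] H) (hsa : IsSelfAdjoint ε) (hsq : ε ∘L ε = 1) (p : ℝ) (hp : 1 ≤ p)
    (g h : (H →L[ℂ] H)ˣ) (hg : MemGLp e ε p g) (hh : MemGLp e ε p h) :
    MemGLp e ε p (g * h) ∧ MemGLp e ε p g⁻¹ :=
  memGLp_mul_inv_general e ε hsq p hp g h hg hh
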